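/- (Theorem 4.3, second identity.) In U(gl(m,ℂ)), for every q ≥ 0 and all 1 ≤ k,l ≤ m, Σ_{p=0}^q binom(q,p)·(−m)^{q−p}·e_{kl}^p = (−1)^q · Σ_{p=0}^q K_{q−p}(−c̃)·ẽ_{lk}^p (note the transposed indices l,k on the right-hand side). -/

import Mathlib

open Finset

attribute [local instance 100] LieRing.ofAssociativeRing

/-- `gl(m, ℂ)`: the Lie algebra of `m × m` complex matrices. -/
abbrev glm (m : ℕ) := Matrix (Fin m) (Fin m) ℂ

/-- The universal enveloping algebra `U(gl(m,ℂ))`. -/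
abbrev UEA (m : ℕ) := UniversalEnvelopingAlgebra ℂ (glm m)

/-- The image of the matrix unit `e_{kl}` in `U(gl(m,ℂ))`. -/
noncomputable def E {m : ℕ} (k l : Fin m) : UEA m :=
  UniversalEnvelopingAlgebra.ι ℂ (Matrix.single k l (1 : ℂ))

/-- `e_{kl}^q`, defined by `e_{kl}^0 = δ_{kl}` and `e_{kl}^{q+1} = Σ_i e_{ki} e_{il}^q`. -/
noncomputable def Epow {m : ℕ} : ℕ → Fin m → Fin m → UEA m
  | 0, k, l => if k = l then 1 else 0
  | q + 1, k, l => ∑ i, E k i * Epow q i l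

/-- `ẽ_{kl}^q`, defined by `ẽ_{kl}^0 = δ_{kl}` and `ẽ_{kl}^{q+1} = −Σ_i e_{ik} ẽ_{il}^q`. -/
noncomputable def Etil {m : ℕ} : ℕ → Fin m → Fin m → UEA m
  | 0, k, l => if k = l then 1 else 0
  | q + 1, k, l => -∑ i, E i k * Etil q i l

/-- The Casimir element `c_q = Σ_k e_{kk}^q`. -/
noncomputable def Cas (m : ℕ) (q : ℕ) : UEA m := ∑ k : Fin m, Epow q k k

/-- The Casimir element `c̃_q = Σ_k ẽ_{kk}^q`. -/
noncomputable def CasT (m : ℕ) (q : ℕ) : UEA m := ∑ k : Fin m, Etil q k k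

/-- `K_n(−c) ∈ U(gl(m,ℂ))`: `K_0(−c) = 1` and `K_n(−c) = Σ_{p=0}^{n−1} K_p(−c)·c_{n−1−p}`. -/
noncomputable def Kc (m : ℕ) : ℕ → UEA m
  | 0 => 1
  | n + 1 => ∑ p ∈ (Finset.range (n + 1)).attach, Kc m p.1 * Cas m (n - p.1)
  decreasing_by exact Finset.mem_range.mp p.2

/-- `K_n(−c̃) ∈ U(gl(m,ℂ))`: `K_0(−c̃) = 1` and `K_n(−c̃) = Σ_{p=0}^{n−1} K_p(−c̃)·c̃_{n−1−p}`. -/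
noncomputable def KcT (m : ℕ) : ℕ → UEA m
  | 0 => 1
  | n + 1 => ∑ p ∈ (Finset.range (n + 1)).attach, KcT m p.1 * CasT m (n - p.1)
  decreasing_by exact Finset.mem_range.mp p.2

/-!
Put the generators into one matrix `M` with entries `e_{ij}` and let `F = -Mᵀ`, so that `e_{kl}^q`
and `ẽ_{kl}^q` are the entries of `M ^ q` and `F ^ q`. The commutation relations of `gl(m)` say
that `F` commutes with every `e_{ij} ⊗ 1 + 1 ⊗ E_{ij}`; hence so does each power `X = F ^ p`.
Entrywise this means that `tr X` commutes with the generators and that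
`(M - m) * Xᵀ = -(X * F)ᵀ - tr X`. Multiplying by the central `K_{q-p}` and summing over `p`, the
trace terms add up to `K_{q+1}`, so `M - m` takes the sum `Σ_p K_{q-p} (F ^ p)ᵀ` to minus the next
one. Therefore this sum is `(-1) ^ q (M - m) ^ q`, and the left-hand side of the theorem is the
binomial expansion of `(M - m) ^ q`.
-/

section GeneralLinear

open Matrix

variable {n A : Type*} [Fintype n] [DecidableEq n] [Ring A]

/-- The entries of `M` satisfy the commutation relations of the matrix units of `gl(n)`. -/
def IsGLMatrix (M : Matrix n n A) : Prop :=
  ∀ i j k l, ⁅M i j, M k l⁆ = (if j = k then M i l else 0) - (if l = i then M k j else 0)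

theorem lie_single_single (i j k l : n) :
    ⁅single i j (1 : A), single k l (1 : A)⁆
      = (if j = k then single i l 1 else 0) - (if l = i then single k j 1 else 0) := by
  rw [Ring.lie_def]
  congr 1 <;> split_ifs with h <;> simp [h]

/-- `X` is equivariant under the simultaneous action of the generators `M i j` on the entries of a
matrix (by commutators) and of the matrix units on its indices: it commutes with
`M i j ⊗ 1 + 1 ⊗ E_{ij}`. In this form closure under products is evident. -/
def IsEquivariant (M X : Matrix n n A) : Prop :=
  ∀ i j, Commute (scalar n (M i j) + single i j 1) X

variable {M X : Matrix n n A}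

theorem isEquivariant_iff :
    IsEquivariant M X ↔ ∀ i j k l,
      ⁅M i j, X k l⁆ = (if j = l then X k i else 0) - (if k = i then X j l else 0) := by
  refine forall₂_congr fun i j => ?_
  rw [commute_iff_eq, ← Matrix.ext_iff]
  refine forall₂_congr fun k l => ?_
  have single_mul_entry : (single i j 1 * X : Matrix n n A) k l = if k = i then X j l else 0 := by
    split_ifs with h
    · subst h; simp
    · exact single_mul_apply_of_ne _ _ _ _ _ h _
  have mul_single_entry : (X * single i j 1 : Matrix n n A) k l = if j = l then X k i else 0 := by
    split_ifs with h
    · subst h; simp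
    · exact mul_single_apply_of_ne _ _ _ _ _ (Ne.symm h) _
  rw [add_mul, mul_add, Matrix.add_apply, Matrix.add_apply, single_mul_entry, mul_single_entry,
    scalar_apply, diagonal_mul, mul_diagonal, Ring.lie_def, sub_eq_sub_iff_add_eq_add,
    add_comm (X k l * _)]

theorem IsEquivariant.pow (h : IsEquivariant M X) (p : ℕ) : IsEquivariant M (X ^ p) :=
  fun i j => (h i j).pow_right p

theorem IsEquivariant.commute_trace (h : IsEquivariant M X) (i j : n) :
    Commute (M i j) (trace X) := by
  rw [commute_iff_lie_eq, trace, lie_sum]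
  simp [isEquivariant_iff.mp h]

theorem IsEquivariant.mul_transpose (h : IsEquivariant M X) :
    M * Xᵀ = (X * Mᵀ)ᵀ + Fintype.card n • Xᵀ - scalar n (trace X) := by
  ext k l
  have swap (i : n) : M k i * X l i = X l i * M k i + (X l k - if l = k then X i i else 0) := by
    rw [← sub_eq_iff_eq_add', ← Ring.lie_def, isEquivariant_iff.mp h, if_pos rfl]
  have sum_diag : ∑ i, (if l = k then X i i else 0) = scalar n (trace X) k l := by
    simp only [scalar_apply, diagonal_apply, eq_comm (a := k), trace, diag_apply]
    split_ifs <;> simp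
  calc (M * Xᵀ) k l = ∑ i, (X l i * M k i + (X l k - if l = k then X i i else 0)) :=
        sum_congr rfl fun i _ => swap i
    _ = _ := by
      rw [sum_add_distrib, sum_sub_distrib, sum_diag, ← add_sub_assoc]
      simp only [mul_apply, Matrix.sub_apply, Matrix.add_apply, Matrix.smul_apply, transpose_apply,
        sum_const, card_univ]

theorem IsGLMatrix.isEquivariant_neg_transpose (hM : IsGLMatrix M) : IsEquivariant M (-Mᵀ) := by
  refine isEquivariant_iff.mpr fun i j k l => ?_
  simp only [Matrix.neg_apply, transpose_apply, lie_neg, hM i j l k]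
  split_ifs <;> abel

theorem IsGLMatrix.sub_card_mul_transpose_pow (hM : IsGLMatrix M) (p : ℕ) :
    (M - (Fintype.card n : Matrix n n A)) * ((-Mᵀ) ^ p)ᵀ
      = -(((-Mᵀ) ^ (p + 1))ᵀ + scalar n (trace ((-Mᵀ) ^ p))) := by
  rw [sub_mul, (hM.isEquivariant_neg_transpose.pow p).mul_transpose, pow_succ, mul_neg,
    transpose_neg, nsmul_eq_mul]
  abel

theorem commute_of_convolution_recursion {a : A} {c K : ℕ → A} (hc : ∀ p, Commute a (c p))
    (hK₀ : K 0 = 1) (hK : ∀ q, K (q + 1) = ∑ p ∈ antidiagonal q, K p.1 * c p.2) (q : ℕ) :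
    Commute a (K q) := by
  induction q using Nat.strong_induction_on with
  | _ q ih =>
    cases q with
    | zero => exact hK₀ ▸ Commute.one_right a
    | succ q =>
      rw [hK]
      exact Commute.sum_right _ _ _ fun p hp =>
        (ih p.1 (Nat.antidiagonal.fst_lt hp)).mul_right (hc p.2)

theorem commute_scalar_of_forall_commute {a : A} (h : ∀ i j, Commute (M i j) a) :
    Commute M (scalar n a) := by
  ext i j
  simpa using (h i j).eq

variable {K : ℕ → A}

theorem IsGLMatrix.sub_card_mul_sum_antidiagonal (hM : IsGLMatrix M) (hK₀ : K 0 = 1)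
    (hK : ∀ q, K (q + 1) = ∑ p ∈ antidiagonal q, K p.1 * trace ((-Mᵀ) ^ p.2)) (q : ℕ) :
    (M - (Fintype.card n : Matrix n n A))
        * ∑ p ∈ antidiagonal q, scalar n (K p.1) * ((-Mᵀ) ^ p.2)ᵀ
      = -∑ p ∈ antidiagonal (q + 1), scalar n (K p.1) * ((-Mᵀ) ^ p.2)ᵀ := by
  have commute_K (p : ℕ) :
      Commute (M - (Fintype.card n : Matrix n n A)) (scalar n (K p)) := by
    refine Commute.sub_left (commute_scalar_of_forall_commute fun i j => ?_)
      (Nat.cast_commute _ _)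
    exact commute_of_convolution_recursion
      (fun r => (hM.isEquivariant_neg_transpose.pow r).commute_trace i j) hK₀ hK p
  have sub_card_mul_term (p : ℕ × ℕ) :
      (M - (Fintype.card n : Matrix n n A)) * (scalar n (K p.1) * ((-Mᵀ) ^ p.2)ᵀ)
        = -(scalar n (K p.1) * ((-Mᵀ) ^ (p.2 + 1))ᵀ
          + scalar n (K p.1 * trace ((-Mᵀ) ^ p.2))) := by
    rw [(commute_K p.1).left_comm, hM.sub_card_mul_transpose_pow, mul_neg, mul_add, map_mul]
  rw [mul_sum, sum_congr rfl fun p _ => sub_card_mul_term p, sum_neg_distrib, sum_add_distrib,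
    ← map_sum, ← hK, Nat.sum_antidiagonal_succ', pow_zero, transpose_one, mul_one, add_comm]

theorem IsGLMatrix.sub_card_pow (hM : IsGLMatrix M) (hK₀ : K 0 = 1)
    (hK : ∀ q, K (q + 1) = ∑ p ∈ antidiagonal q, K p.1 * trace ((-Mᵀ) ^ p.2)) (q : ℕ) :
    (M - (Fintype.card n : Matrix n n A)) ^ q
      = (-1) ^ q * ∑ p ∈ antidiagonal q, scalar n (K p.1) * ((-Mᵀ) ^ p.2)ᵀ := by
  induction q with
  | zero => simp [hK₀]
  | succ q ih =>
    rw [pow_succ', ih, ((Commute.neg_one_right _).pow_right q).left_comm,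
      hM.sub_card_mul_sum_antidiagonal hK₀ hK, mul_neg, pow_succ, mul_neg_one, neg_mul]

theorem sub_natCast_pow_apply (R : Type*) [CommRing R] [Algebra R A] (M : Matrix n n A) (a q : ℕ)
    (k l : n) :
    ((M - (a : Matrix n n A)) ^ q) k l
      = ∑ p ∈ range (q + 1), ((q.choose p : R) * (-(a : R)) ^ (q - p)) • (M ^ p) k l := by
  have coeff (p : ℕ) : M ^ p * (-(a : Matrix n n A)) ^ (q - p) * (q.choose p : Matrix n n A)
      = ((q.choose p : R) * (-(a : R)) ^ (q - p)) • M ^ p := by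
    rw [Algebra.smul_def, Algebra.commutes, mul_comm (q.choose p : R), mul_assoc]
    simp only [map_mul, map_pow, map_neg, map_natCast]
  rw [sub_eq_add_neg, (Nat.cast_commute a M).symm.neg_right.add_pow, Matrix.sum_apply]
  simp only [coeff, Matrix.smul_apply]

theorem statement13_general {R : Type*} [CommRing R] [Algebra R A] (hM : IsGLMatrix M)
    (hK₀ : K 0 = 1)
    (hK : ∀ q, K (q + 1) = ∑ p ∈ antidiagonal q, K p.1 * trace ((-Mᵀ) ^ p.2)) (q : ℕ) (k l : n) :
    ∑ p ∈ range (q + 1), ((q.choose p : R) * (-(Fintype.card n : R)) ^ (q - p)) • (M ^ p) k l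
      = (-1 : R) ^ q • ∑ p ∈ range (q + 1), K (q - p) * ((-Mᵀ) ^ p) l k := by
  have sign : ((-1) ^ q : Matrix n n A) = algebraMap R _ ((-1) ^ q) := by simp
  rw [← sub_natCast_pow_apply, hM.sub_card_pow hK₀ hK, sign, ← Algebra.smul_def,
    Matrix.smul_apply, Matrix.sum_apply, ← Nat.sum_antidiagonal_swap]
  simp only [Prod.fst_swap, Prod.snd_swap, scalar_apply, diagonal_mul, transpose_apply]
  rw [Nat.sum_antidiagonal_eq_sum_range_succ fun i j => K j * ((-Mᵀ) ^ i) l k]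

end GeneralLinear

section UniversalEnveloping

open Matrix

/-- The matrix over `U(gl(m,ℂ))` whose `(k, l)` entry is the generator `e_{kl}`. -/
noncomputable def generatorMatrix (m : ℕ) : Matrix (Fin m) (Fin m) (UEA m) := of E

variable {m : ℕ}

theorem isGLMatrix_generatorMatrix : IsGLMatrix (generatorMatrix m) := by
  intro i j k l
  simp only [generatorMatrix, of_apply, E]
  rw [← LieHom.map_lie, lie_single_single, map_sub, apply_ite (UniversalEnvelopingAlgebra.ι ℂ),
    apply_ite (UniversalEnvelopingAlgebra.ι ℂ), map_zero]

theorem Epow_eq_generatorMatrix_pow (q : ℕ) (k l : Fin m) :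
    Epow q k l = (generatorMatrix m ^ q) k l := by
  induction q generalizing k with
  | zero => simp only [Epow, pow_zero, one_apply]
  | succ q ih => simp only [Epow, pow_succ', mul_apply, ih, generatorMatrix, of_apply]

theorem Etil_eq_neg_transpose_generatorMatrix_pow (q : ℕ) (k l : Fin m) :
    Etil q k l = ((-(generatorMatrix m)ᵀ) ^ q) k l := by
  induction q generalizing k with
  | zero => simp only [Etil, pow_zero, one_apply]
  | succ q ih =>
    simp only [Etil, pow_succ', mul_apply, ih, generatorMatrix, of_apply, Matrix.neg_apply,
      transpose_apply, neg_mul, sum_neg_distrib]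

theorem CasT_eq_trace (q : ℕ) : CasT m q = trace ((-(generatorMatrix m)ᵀ) ^ q) :=
  sum_congr rfl fun k _ => Etil_eq_neg_transpose_generatorMatrix_pow q k k

theorem KcT_zero : KcT m 0 = 1 := by
  rw [KcT]

theorem KcT_succ (q : ℕ) :
    KcT m (q + 1)
      = ∑ p ∈ antidiagonal q, KcT m p.1 * trace ((-(generatorMatrix m)ᵀ) ^ p.2) := by
  simp only [← CasT_eq_trace]
  rw [KcT, Nat.sum_antidiagonal_eq_sum_range_succ fun i j => KcT m i * CasT m j]
  exact sum_attach (range (q + 1)) fun p => KcT m p * CasT m (q - p)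

end UniversalEnveloping

/-- Theorem 4.3, second identity:
`Σ_{p=0}^q C(q,p) (−m)^{q−p} e_{kl}^p = (−1)^q Σ_{p=0}^q K_{q−p}(−c̃) ẽ_{lk}^p`. -/
theorem statement13 (m : ℕ) (hm : 1 ≤ m) (q : ℕ) (k l : Fin m) :
    ∑ p ∈ Finset.range (q + 1), ((q.choose p : ℂ) * (-(m : ℂ)) ^ (q - p)) • Epow p k l
      = (-1 : ℂ) ^ q • ∑ p ∈ Finset.range (q + 1), KcT m (q - p) * Etil p l k := by
  simpa only [Epow_eq_generatorMatrix_pow, Etil_eq_neg_transpose_generatorMatrix_pow,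
    Fintype.card_fin] using statement13_general isGLMatrix_generatorMatrix KcT_zero KcT_succ q k l
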